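/- Let n ≥ 1 and let f : ℝⁿ → ℝ be a smooth function with ∫_{ℝⁿ} f² dx = 1 and ∫_{ℝⁿ} |∇f|² dx < ∞, such that f² log f² is integrable. Then the Stam-type logarithmic Sobolev inequality holds: ∫_{ℝⁿ} f² log f² dx ≤ (n/2) log( (2/(πen)) ∫_{ℝⁿ} |∇f|² dx ). -/

import Mathlib

open Real MeasureTheory

/-!
In dimension one, let `g = f²` have mass `m`, let `γ` be the centred Gaussian density of variance
`v`, and let `T` be the increasing map that transports `g / m` to `γ`, so that
`g = m T' γ(T)`. Taking logarithms, `log T' ≤ T' - 1` and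
`g T² / (2v) + g' T + 2v |f'|² = (f T / √(2v) + √(2v) f')² ≥ 0` bound `g log g` by
`(g T)' + 2v |f'|²` plus a multiple of `g`, and the exact derivative integrates to zero. To make
the source density positive, a small multiple of `γ` is added to `g`.

The bound tensorises: one coordinate is integrated out by the one-dimensional inequality on lines,
and the next one is treated by the same inequality for the marginal, whose Fisher information is
at most the marginal of the Fisher information. Cutoffs remove the assumption of compact support,
and choosing the best `v` gives the sharp constant.
-/

open Filter Function ProbabilityTheory Set Topology
open scoped CompactlySupported Gradient NNReal

section Real

lemma abs_mul_mul_log_mul_le {u w : ℝ} (hu₀ : 0 ≤ u) (hu₁ : u ≤ 1) (hw : 0 ≤ w) :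
    |u * w * log (u * w)| ≤ w + |w * log w| := by
  have hu : |negMulLog u| ≤ 1 := by
    rw [abs_of_nonneg (negMulLog_nonneg hu₀ hu₁)]
    linarith [negMulLog_le_one_sub_self hu₀]
  calc |u * w * log (u * w)| = |w * negMulLog u + u * negMulLog w| := by
        rw [← negMulLog_mul, negMulLog, neg_mul, abs_neg]
    _ ≤ |w * negMulLog u| + |u * negMulLog w| := abs_add_le _ _
    _ = w * |negMulLog u| + u * |w * log w| := by
        rw [abs_mul, abs_mul, abs_of_nonneg hw, abs_of_nonneg hu₀, negMulLog, negMulLog, neg_mul,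
          neg_mul, abs_neg, abs_neg]
    _ ≤ w + |w * log w| :=
        add_le_add (mul_le_of_le_one_right hw hu) (mul_le_of_le_one_left (abs_nonneg _) hu₁)

lemma le_mul_log_of_forall_le {b c H : ℝ} (hb : 0 ≤ b) (hc : 0 < c)
    (h : ∀ v > 0, H ≤ b * v - c * log v) : H ≤ c * log (b * exp 1 / c) := by
  rcases hb.eq_or_lt with rfl | hb
  · have := h (exp ((1 - H) / c)) (exp_pos _)
    rw [log_exp, mul_div_cancel₀ _ hc.ne'] at this
    linarith
  · have := h (c / b) (div_pos hc hb)
    rw [mul_div_cancel₀ _ hb.ne', log_div hc.ne' hb.ne'] at this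
    rw [log_div (by positivity) hc.ne', log_mul hb.ne' (exp_ne_zero 1), log_exp]
    linarith

lemma log_gaussianPDFReal (μ : ℝ) {v : ℝ≥0} (hv : v ≠ 0) (x : ℝ) :
    log (gaussianPDFReal μ v x) = -(log (2 * π * v) / 2) - (x - μ) ^ 2 / (2 * v) := by
  have : 0 < 2 * π * v := by positivity
  rw [gaussianPDFReal, log_mul (by positivity) (exp_ne_zero _), log_inv, log_sqrt this.le, log_exp]
  ring

lemma continuous_gaussianPDFReal (μ : ℝ) (v : ℝ≥0) : Continuous (gaussianPDFReal μ v) := by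
  unfold gaussianPDFReal
  fun_prop

end Real

section Transport

lemma exists_forall_hasDerivAt_div_comp {F F' G G' : ℝ → ℝ} (hF_inj : Injective F)
    (hF : ∀ t, HasStrictDerivAt F (F' t) t) (hF' : ∀ t, F' t ≠ 0)
    (hG : ∀ x, HasDerivAt G (G' x) x) (hGF : range G ⊆ range F) :
    ∃ T : ℝ → ℝ, ∀ x, HasDerivAt T (G' x / F' (T x)) x := by
  have hF_cont : Continuous F :=
    continuous_iff_continuousAt.2 fun t ↦ (hF t).hasDerivAt.continuousAt
  let e := (IsOpenEmbedding.of_continuous_injective_isOpenMap hF_cont hF_inj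
    (isOpenMap_of_hasStrictDerivAt hF hF')).toOpenPartialHomeomorph
  refine ⟨e.symm ∘ G, fun x ↦ ?_⟩
  have he : HasDerivAt e.symm (F' (e.symm (G x)))⁻¹ (G x) :=
    e.hasDerivAt_symm (by simpa [e] using hGF (mem_range_self x)) (hF' _) (hF _).hasDerivAt
  simpa [div_eq_inv_mul] using he.comp x (hG x)

variable {φ : ℝ → ℝ}

lemma hasStrictDerivAt_integral_Iic (hφ : Continuous φ) (hφi : Integrable φ) (x : ℝ) :
    HasStrictDerivAt (fun x ↦ ∫ t in Iic x, φ t) (φ x) x := by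
  have hsplit (y : ℝ) : ∫ t in Iic y, φ t = (∫ t in Iic 0, φ t) + ∫ t in 0..y, φ t := by
    rw [← intervalIntegral.integral_Iic_sub_Iic hφi.integrableOn hφi.integrableOn]
    ring
  rw [funext hsplit]
  exact (intervalIntegral.integral_hasStrictDerivAt_right (hφ.intervalIntegrable _ _)
    (hφ.stronglyMeasurableAtFilter _ _) hφ.continuousAt).const_add _

lemma strictMono_integral_Iic (hφ : Continuous φ) (hφi : Integrable φ) (hφ₀ : ∀ x, 0 < φ x) :
    StrictMono fun x ↦ ∫ t in Iic x, φ t :=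
  strictMono_of_hasDerivAt_pos
    (fun x ↦ (hasStrictDerivAt_integral_Iic hφ hφi x).hasDerivAt) hφ₀

lemma range_integral_Iic (hφ : Continuous φ) (hφi : Integrable φ) (hφ₀ : ∀ x, 0 < φ x) :
    range (fun x ↦ ∫ t in Iic x, φ t) = Ioo 0 (∫ t, φ t) := by
  have hmono := strictMono_integral_Iic hφ hφi hφ₀
  have hbot : Tendsto (fun x ↦ ∫ t in Iic x, φ t) atBot (𝓝 0) :=
    tendsto_integral_Iic_zero tendsto_id
  have htop : Tendsto (fun x ↦ ∫ t in Iic x, φ t) atTop (𝓝 (∫ t, φ t)) :=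
    (aecover_Iic tendsto_id).integral_tendsto_of_countably_generated hφi
  have hcont : Continuous fun x ↦ ∫ t in Iic x, φ t := continuous_iff_continuousAt.2 fun x ↦
    (hasStrictDerivAt_integral_Iic hφ hφi x).hasDerivAt.continuousAt
  refine Subset.antisymm ?_ fun y hy ↦ ?_
  · rintro _ ⟨x, rfl⟩
    exact ⟨(hmono.monotone.le_of_tendsto hbot _).trans_lt (hmono (sub_one_lt x)),
      (hmono (lt_add_one x)).trans_le (hmono.monotone.ge_of_tendsto htop _)⟩
  · exact mem_range_of_exists_le_of_exists_ge hcont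
      ((hbot.eventually_lt_const hy.1).exists.imp fun _ ↦ le_of_lt)
      ((htop.eventually_const_lt hy.2).exists.imp fun _ ↦ le_of_lt)

lemma exists_transport {γ : ℝ → ℝ} (hφ : Continuous φ) (hφi : Integrable φ) (hφ₀ : ∀ x, 0 < φ x)
    (hγ : Continuous γ) (hγi : Integrable γ) (hγ₀ : ∀ x, 0 < γ x) (h : ∫ x, φ x = ∫ x, γ x) :
    ∃ T : ℝ → ℝ, ∀ x, HasDerivAt T (φ x / γ (T x)) x :=
  exists_forall_hasDerivAt_div_comp (strictMono_integral_Iic hγ hγi hγ₀).injective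
    (hasStrictDerivAt_integral_Iic hγ hγi) (fun t ↦ (hγ₀ t).ne')
    (fun x ↦ (hasStrictDerivAt_integral_Iic hφ hφi x).hasDerivAt)
    (by rw [range_integral_Iic hφ hφi hφ₀, range_integral_Iic hγ hγi hγ₀, h])

end Transport

section OneDimensional

/-- The entropy density `g log g` of a compactly supported function, which is again continuous and
compactly supported because `0 log 0 = 0`. -/
noncomputable def entropyDensity {X : Type*} [TopologicalSpace X] (g : C_c(X, ℝ)) : C_c(X, ℝ) :=
  g.compLeft ⟨fun a ↦ a * log a, continuous_mul_log⟩

lemma entropyDensity_apply {X : Type*} [TopologicalSpace X] (g : C_c(X, ℝ)) (x : X) :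
    entropyDensity g x = g x * log (g x) :=
  CompactlySupportedContinuousMap.compLeft_apply (zero_mul _) g x

lemma nonneg_of_forall_quadratic_nonneg {a b c : ℝ} (h : ∀ t, 0 ≤ a * t ^ 2 + b * t + c) :
    0 ≤ a := by
  by_contra! ha
  have hc : 0 ≤ c := by simpa using h 0
  have ht : 1 ≤ 1 - c / a := by linarith [div_nonpos_of_nonneg_of_nonpos hc ha.le]
  have hat : a * (1 - c / a) = a - c := by field_simp [ha.ne]
  nlinarith [h (1 - c / a), h (-(1 - c / a))]

lemma mul_log_le_of_le_mul {v : ℝ≥0} (hv : v ≠ 0) {g p D m φ : ℝ}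
    (h : ∀ t, 0 ≤ g * t ^ 2 + p * t + D) (hm : 0 < m) (hφ : 0 < φ) (hg : g ≤ m * φ) (t : ℝ) :
    g * log g ≤ g * (φ / gaussianPDFReal 0 v t) + p * t + 2 * v * D +
      g * (log m - (1 + log (2 * π * v) / 2)) := by
  have hg₀ := nonneg_of_forall_quadratic_nonneg h
  have hγ : 0 < gaussianPDFReal 0 v t := gaussianPDFReal_pos 0 v t hv
  have : (0 : ℝ) < v := by positivity
  have hlog : log φ = log (φ / gaussianPDFReal 0 v t) - log (2 * π * v) / 2 - t ^ 2 / (2 * v) := by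
    rw [log_div hφ.ne' hγ.ne', log_gaussianPDFReal 0 hv, sub_zero]
    ring
  have hlin : log φ ≤
      φ / gaussianPDFReal 0 v t - 1 - log (2 * π * v) / 2 - t ^ 2 / (2 * v) := by
    linarith [log_le_sub_one_of_pos (div_pos hφ hγ)]
  have hmass : g * log g ≤ g * (log m + log φ) := by
    rcases hg₀.eq_or_lt with rfl | hg₀
    · simp
    · rw [← log_mul hm.ne' hφ.ne']
      gcongr
  have hquad : 0 ≤ g * (t ^ 2 / (2 * v)) + p * t + 2 * v * D := by
    calc 0 ≤ 2 * v * (g * (t / (2 * v)) ^ 2 + p * (t / (2 * v)) + D) :=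
          mul_nonneg (by positivity) (h _)
      _ = g * (t ^ 2 / (2 * v)) + p * t + 2 * v * D := by field_simp
  linarith [mul_le_mul_of_nonneg_left hlin hg₀]

variable {v : ℝ≥0}

lemma exists_gaussian_transport (hv : v ≠ 0) {g : ℝ → ℝ} (hg : Continuous g) (hgi : Integrable g)
    (hg₀ : ∀ x, 0 ≤ g x) {ε : ℝ} (hε : 0 < ε) :
    ∃ φ T : ℝ → ℝ, Continuous φ ∧ (∀ x, 0 < φ x) ∧ (∀ x, g x ≤ ((∫ x, g x) + ε) * φ x) ∧
      ∀ x, HasDerivAt T (φ x / gaussianPDFReal 0 v (T x)) x := by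
  set γ := gaussianPDFReal 0 v
  have hγ : Continuous γ := continuous_gaussianPDFReal 0 v
  have hγ₀ (x : ℝ) : 0 < γ x := gaussianPDFReal_pos 0 v x hv
  have hγi : Integrable γ := integrable_gaussianPDFReal 0 v
  have hm : 0 < (∫ x, g x) + ε := add_pos_of_nonneg_of_pos (integral_nonneg hg₀) hε
  let φ (x : ℝ) : ℝ := (g x + ε * γ x) / ((∫ x, g x) + ε)
  have hφ : Continuous φ := by fun_prop
  have hφ₀ (x : ℝ) : 0 < φ x := div_pos (by linarith [hg₀ x, mul_pos hε (hγ₀ x)]) hm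
  have hφi : Integrable φ := (hgi.add (hγi.const_mul ε)).div_const _
  have hφγ : ∫ x, φ x = ∫ x, γ x := by
    rw [integral_div, integral_add hgi (hγi.const_mul ε), integral_const_mul,
      integral_gaussianPDFReal_eq_one 0 hv, mul_one, div_self hm.ne']
  obtain ⟨T, hT⟩ := exists_transport hφ hφi hφ₀ hγ hγi hγ₀ hφγ
  refine ⟨φ, T, hφ, hφ₀, fun x ↦ ?_, hT⟩
  rw [mul_div_cancel₀ _ hm.ne']
  linarith [mul_pos hε (hγ₀ x)]

variable {g p D : C_c(ℝ, ℝ)}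

lemma integral_entropyDensity_le_of_pos (hv : v ≠ 0) (hg : ∀ x, HasDerivAt g (p x) x)
    (h : ∀ x t, 0 ≤ g x * t ^ 2 + p x * t + D x) {ε : ℝ} (hε : 0 < ε) :
    ∫ x, entropyDensity g x ≤
      2 * v * (∫ x, D x) + (∫ x, g x) * (log ((∫ x, g x) + ε) - (1 + log (2 * π * v) / 2)) := by
  have hg₀ (x : ℝ) : 0 ≤ g x := nonneg_of_forall_quadratic_nonneg (h x)
  obtain ⟨φ, T, hφ, hφ₀, hgφ, hT⟩ := exists_gaussian_transport hv g.continuous g.integrable hg₀ hε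
  set γ := gaussianPDFReal 0 v
  set c := log ((∫ x, g x) + ε) - (1 + log (2 * π * v) / 2)
  have hm : 0 < (∫ x, g x) + ε := add_pos_of_nonneg_of_pos (integral_nonneg hg₀) hε
  have hT_cont : Continuous T := continuous_iff_continuousAt.2 fun x ↦ (hT x).continuousAt
  have hT'_cont : Continuous fun x ↦ φ x / γ (T x) :=
    hφ.div ((continuous_gaussianPDFReal 0 v).comp hT_cont) fun x ↦
      (gaussianPDFReal_pos 0 v _ hv).ne'
  have hgT (x : ℝ) : HasDerivAt (fun x ↦ g x * T x) (g x * (φ x / γ (T x)) + p x * T x) x :=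
    add_comm (p x * T x) _ ▸ (hg x).mul (hT x)
  have hgTi : Integrable fun x ↦ g x * T x :=
    (g.continuous.mul hT_cont).integrable_of_hasCompactSupport g.hasCompactSupport.mul_right
  have hgT'i : Integrable fun x ↦ g x * (φ x / γ (T x)) + p x * T x :=
    ((g.continuous.mul hT'_cont).integrable_of_hasCompactSupport
      g.hasCompactSupport.mul_right).add
    ((p.continuous.mul hT_cont).integrable_of_hasCompactSupport p.hasCompactSupport.mul_right)
  have hgT'Di : Integrable fun x ↦ g x * (φ x / γ (T x)) + p x * T x + 2 * v * D x :=
    hgT'i.add (D.integrable.const_mul _)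
  calc ∫ x, entropyDensity g x
      ≤ ∫ x, (g x * (φ x / γ (T x)) + p x * T x + 2 * v * D x + g x * c) := by
        refine integral_mono (entropyDensity g).integrable
          (hgT'Di.add (g.integrable.mul_const c)) fun x ↦ ?_
        rw [entropyDensity_apply]
        exact mul_log_le_of_le_mul hv (h x) hm (hφ₀ x) (hgφ x) (T x)
    _ = 2 * v * (∫ x, D x) + (∫ x, g x) * c := by
        rw [integral_add hgT'Di (g.integrable.mul_const c),
          integral_add hgT'i (D.integrable.const_mul _),
          integral_eq_zero_of_hasDerivAt_of_integrable hgT hgT'i hgTi, zero_add,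
          integral_const_mul, integral_mul_const]

lemma integral_entropyDensity_le_of_hasDerivAt (hv : v ≠ 0) (hg : ∀ x, HasDerivAt g (p x) x)
    (h : ∀ x t, 0 ≤ g x * t ^ 2 + p x * t + D x) :
    ∫ x, entropyDensity g x ≤
      2 * v * (∫ x, D x) + (∫ x, g x) * (log (∫ x, g x) - (1 + log (2 * π * v) / 2)) := by
  have hlim : Tendsto (fun ε ↦ (∫ x, g x) * log ((∫ x, g x) + ε)) (𝓝[>] 0)
      (𝓝 ((∫ x, g x) * log (∫ x, g x))) := by
    rcases eq_or_ne (∫ x, g x) 0 with hM | hM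
    · simp [hM]
    · have : ContinuousAt (fun ε ↦ (∫ x, g x) * log ((∫ x, g x) + ε)) 0 := by
        fun_prop (disch := simpa using hM)
      simpa using this.tendsto.mono_left nhdsWithin_le_nhds
  have hbound : ∀ᶠ ε in 𝓝[>] (0 : ℝ), ∫ x, entropyDensity g x ≤ 2 * v * (∫ x, D x) +
      ((∫ x, g x) * log ((∫ x, g x) + ε) - (∫ x, g x) * (1 + log (2 * π * v) / 2)) := by
    filter_upwards [self_mem_nhdsWithin] with ε hε
    simpa only [mul_sub] using integral_entropyDensity_le_of_pos hv hg h hε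
  simpa only [mul_sub] using ge_of_tendsto ((hlim.sub_const _).const_add _) hbound

end OneDimensional

section Marginal

variable {n : ℕ}

lemma continuous_cons :
    Continuous fun z : ℝ × (Fin n → ℝ) ↦ (Fin.cons z.1 z.2 : Fin (n + 1) → ℝ) :=
  continuous_fst.finCons (A := fun _ ↦ ℝ) continuous_snd

/-- The restriction of a function on `ℝⁿ⁺¹` to the line on which all coordinates but the zeroth are
those of `y`. -/
def slice (F : C_c(Fin (n + 1) → ℝ, ℝ)) (y : Fin n → ℝ) : C_c(ℝ, ℝ) where
  toFun t := F (Fin.cons t y)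
  continuous_toFun := F.continuous.comp (continuous_cons.comp (.prodMk_left y))
  hasCompactSupport' := F.hasCompactSupport.comp_isClosedEmbedding <|
    LeftInverse.isClosedEmbedding (f := fun x : Fin (n + 1) → ℝ ↦ x 0) (fun _ ↦ rfl)
      (continuous_apply 0) (continuous_cons.comp (.prodMk_left y))

lemma slice_apply (F : C_c(Fin (n + 1) → ℝ, ℝ)) (y : Fin n → ℝ) (t : ℝ) :
    slice F y t = F (Fin.cons t y) := rfl

lemma slice_eq_zero_of_notMem (F : C_c(Fin (n + 1) → ℝ, ℝ)) (y : Fin n → ℝ) {t : ℝ}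
    (ht : t ∉ (fun x : Fin (n + 1) → ℝ ↦ x 0) '' tsupport F) : slice F y t = 0 :=
  image_eq_zero_of_notMem_tsupport (f := F) (x := Fin.cons t y) fun h ↦ ht ⟨_, h, rfl⟩

lemma isCompact_image_apply_zero_tsupport (F : C_c(Fin (n + 1) → ℝ, ℝ)) :
    IsCompact ((fun x : Fin (n + 1) → ℝ ↦ x 0) '' tsupport F) :=
  F.hasCompactSupport.isCompact.image (continuous_apply 0)

/-- The function on `ℝⁿ` obtained from a function on `ℝⁿ⁺¹` by integrating out the zeroth
coordinate. -/
noncomputable def marginal (F : C_c(Fin (n + 1) → ℝ, ℝ)) : C_c(Fin n → ℝ, ℝ) where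
  toFun y := ∫ t, slice F y t
  continuous_toFun := by
    rw [← continuousOn_univ]
    exact continuousOn_integral_of_compact_support (isCompact_image_apply_zero_tsupport F)
      (F.continuous.comp (continuous_cons.comp continuous_swap)).continuousOn
      fun y t _ ht ↦ slice_eq_zero_of_notMem F y ht
  hasCompactSupport' := by
    refine HasCompactSupport.intro (F.hasCompactSupport.isCompact.image
      (f := fun x : Fin (n + 1) → ℝ ↦ Fin.tail x) (by unfold Fin.tail; fun_prop)) fun y hy ↦ ?_
    have (t : ℝ) : slice F y t = 0 :=
      image_eq_zero_of_notMem_tsupport (f := F) (x := Fin.cons t y) fun h ↦ hy ⟨_, h, rfl⟩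
    simp only [this, integral_zero]

lemma marginal_apply (F : C_c(Fin (n + 1) → ℝ, ℝ)) (y : Fin n → ℝ) :
    marginal F y = ∫ t, slice F y t := rfl

lemma integral_marginal (F : C_c(Fin (n + 1) → ℝ, ℝ)) : ∫ y, marginal F y = ∫ x, F x := by
  have hmp := (volume_preserving_piFinSuccAbove (fun _ : Fin (n + 1) ↦ ℝ) 0).symm
  have hF := (hmp.integrable_comp_emb (MeasurableEquiv.measurableEmbedding _)).2 F.integrable
  rw [← hmp.integral_comp (MeasurableEquiv.measurableEmbedding _), Measure.volume_eq_prod,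
    integral_prod_symm (fun z ↦ F _) hF]
  simp [marginal_apply, slice_apply, MeasurableEquiv.piFinSuccAbove, Fin.insertNthEquiv]

lemma hasDerivAt_marginal {F F' : C_c(Fin (n + 1) → ℝ, ℝ)} {i : Fin n}
    (h : ∀ x, HasDerivAt (fun t ↦ F (update x i.succ t)) (F' x) (x i.succ)) (y : Fin n → ℝ) :
    HasDerivAt (fun t ↦ marginal F (update y i t)) (marginal F' y) (y i) := by
  set K := (fun x : Fin (n + 1) → ℝ ↦ x 0) '' tsupport F'
  have hK : IsCompact K := isCompact_image_apply_zero_tsupport F'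
  obtain ⟨C, hC⟩ := F'.hasCompactSupport.exists_bound_of_continuous F'.continuous
  have hbound (t u : ℝ) : ‖slice F' (update y i u) t‖ ≤ K.indicator (fun _ ↦ C) t := by
    by_cases ht : t ∈ K
    · rw [indicator_of_mem ht]
      exact hC _
    · rw [indicator_of_notMem ht, slice_eq_zero_of_notMem F' _ ht, norm_zero]
  have hderiv (t u : ℝ) : HasDerivAt (fun u ↦ slice F (update y i u) t)
      (slice F' (update y i u) t) u := by
    simpa [slice_apply, ← Fin.cons_update] using h (Fin.cons t (update y i u))
  have := (hasDerivAt_integral_of_dominated_loc_of_deriv_le (μ := volume) (x₀ := y i) univ_mem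
    (.of_forall fun u ↦ (slice F (update y i u)).continuous.aestronglyMeasurable)
    (slice F (update y i (y i))).integrable
    (slice F' (update y i (y i))).continuous.aestronglyMeasurable
    (.of_forall fun t u _ ↦ hbound t u)
    ((integrable_indicator_iff hK.measurableSet).2 (integrableOn_const hK.measure_ne_top))
    (.of_forall fun t u _ ↦ hderiv t u)).2
  rwa [update_eq_self] at this

end Marginal

section Tensorization

/-- `p` is the gradient of the nonnegative function `g`, and `D` dominates its Fisher information
in the sense that `|∂ᵢ√g|² ≤ Dᵢ`, that is `pᵢ² ≤ 4 g Dᵢ`. The latter is encoded as nonnegativity of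
the quadratic polynomial `g t² + pᵢ t + Dᵢ`: this is linear in `(g, p, D)`, so that it passes to
marginals by integration. -/
structure IsFisherMajorant {n : ℕ} (g : C_c(Fin n → ℝ, ℝ)) (p D : Fin n → C_c(Fin n → ℝ, ℝ)) :
    Prop where
  hasDerivAt (i : Fin n) (x : Fin n → ℝ) : HasDerivAt (fun t ↦ g (update x i t)) (p i x) (x i)
  quadratic_nonneg (i : Fin n) (x : Fin n → ℝ) (t : ℝ) : 0 ≤ g x * t ^ 2 + p i x * t + D i x

lemma IsFisherMajorant.marginal_succ {n : ℕ} {g : C_c(Fin (n + 1) → ℝ, ℝ)}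
    {p D : Fin (n + 1) → C_c(Fin (n + 1) → ℝ, ℝ)} (h : IsFisherMajorant g p D) :
    IsFisherMajorant (marginal g) (fun i ↦ marginal (p i.succ)) (fun i ↦ marginal (D i.succ)) where
  hasDerivAt i := hasDerivAt_marginal (h.hasDerivAt i.succ)
  quadratic_nonneg i y t := by
    have hg := (slice g y).integrable (μ := volume)
    have hp := (slice (p i.succ) y).integrable (μ := volume)
    have hD := (slice (D i.succ) y).integrable (μ := volume)
    simp only [marginal_apply]
    rw [← integral_mul_const, ← integral_mul_const,
      ← integral_add (hg.mul_const _) (hp.mul_const _),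
      ← integral_add (by exact (hg.mul_const _).add (hp.mul_const _)) hD]
    exact integral_nonneg fun s ↦ h.quadratic_nonneg i.succ (Fin.cons s y) t

lemma IsFisherMajorant.marginal_entropyDensity_le {n : ℕ} {v : ℝ≥0} (hv : v ≠ 0)
    {g : C_c(Fin (n + 1) → ℝ, ℝ)} {p D : Fin (n + 1) → C_c(Fin (n + 1) → ℝ, ℝ)}
    (h : IsFisherMajorant g p D) (y : Fin n → ℝ) :
    marginal (entropyDensity g) y ≤ 2 * v * marginal (D 0) y +
      (entropyDensity (marginal g) y - marginal g y * (1 + log (2 * π * v) / 2)) := by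
  have hslice : slice (entropyDensity g) y = entropyDensity (slice g y) := by
    ext t
    simp only [slice_apply, entropyDensity_apply]
  rw [marginal_apply, hslice, entropyDensity_apply, ← mul_sub]
  refine integral_entropyDensity_le_of_hasDerivAt hv (p := slice (p 0) y) (fun t ↦ ?_)
    fun t ↦ h.quadratic_nonneg 0 (Fin.cons t y)
  have : HasDerivAt (fun s ↦ g (Fin.cons s y)) (p 0 (Fin.cons t y)) t := by
    simpa [Fin.update_cons_zero] using h.hasDerivAt 0 (Fin.cons t y)
  exact this

lemma IsFisherMajorant.integral_entropyDensity_le {v : ℝ≥0} (hv : v ≠ 0) {n : ℕ}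
    {g : C_c(Fin n → ℝ, ℝ)} {p D : Fin n → C_c(Fin n → ℝ, ℝ)} (h : IsFisherMajorant g p D) :
    ∫ x, entropyDensity g x ≤ 2 * v * (∑ i, ∫ x, D i x) +
      (∫ x, g x) * (log (∫ x, g x) - n * (1 + log (2 * π * v) / 2)) := by
  induction n with
  | zero => simp [Measure.volume_pi_eq_dirac (0 : Fin 0 → ℝ), entropyDensity_apply]
  | succ n ih =>
    have hi : Integrable fun y ↦ entropyDensity (marginal g) y -
        marginal g y * (1 + log (2 * π * v) / 2) :=
      (entropyDensity _).integrable.sub ((marginal g).integrable.mul_const _)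
    have hfirst := integral_mono (marginal (entropyDensity g)).integrable
      (((marginal (D 0)).integrable.const_mul (2 * v : ℝ)).add hi)
      (h.marginal_entropyDensity_le hv)
    rw [integral_add' ((marginal (D 0)).integrable.const_mul _) hi,
      integral_sub (entropyDensity _).integrable ((marginal g).integrable.mul_const _),
      integral_const_mul, integral_mul_const] at hfirst
    have hrest := ih h.marginal_succ
    simp only [integral_marginal] at hfirst hrest
    rw [Fin.sum_univ_succ]
    push_cast
    linarith

lemma isFisherMajorant_mul_self {n : ℕ} {f : C_c(Fin n → ℝ, ℝ)} {d : Fin n → C_c(Fin n → ℝ, ℝ)}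
    (h : ∀ i x, HasDerivAt (fun t ↦ f (update x i t)) (d i x) (x i)) :
    IsFisherMajorant (f * f) (fun i ↦ (2 : ℝ) • (f * d i)) (fun i ↦ d i * d i) where
  hasDerivAt i x := by
    refine ((h i x).fun_mul (h i x)).congr_deriv ?_
    simp only [update_eq_self, CompactlySupportedContinuousMap.smul_apply,
      CompactlySupportedContinuousMap.mul_apply, smul_eq_mul]
    ring
  quadratic_nonneg i x t := by
    have : 0 ≤ (f x * t + d i x) ^ 2 := sq_nonneg _
    simp only [CompactlySupportedContinuousMap.mul_apply,
      CompactlySupportedContinuousMap.smul_apply, smul_eq_mul]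
    linarith

end Tensorization

section EuclideanSpace

variable {E : Type*} [NormedAddCommGroup E] [InnerProductSpace ℝ E] {n : ℕ}

/-- The linear parametrisation of a Euclidean space by its coordinates in an orthonormal basis. -/
noncomputable def ofCoordinates (b : OrthonormalBasis (Fin n) ℝ E) : (Fin n → ℝ) ≃L[ℝ] E :=
  (EuclideanSpace.equiv (Fin n) ℝ).symm.trans b.repr.symm.toContinuousLinearEquiv

lemma ofCoordinates_single (b : OrthonormalBasis (Fin n) ℝ E) (i : Fin n) :
    ofCoordinates b (Pi.single i 1) = b i :=
  b.repr_symm_single i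

lemma hasDerivAt_comp_ofCoordinates_update (b : OrthonormalBasis (Fin n) ℝ E) {f : E → ℝ}
    (hf : Differentiable ℝ f) (i : Fin n) (x : Fin n → ℝ) :
    HasDerivAt (fun t ↦ f (ofCoordinates b (update x i t)))
      (fderiv ℝ f (ofCoordinates b x) (b i)) (x i) := by
  have hcurve := (ofCoordinates b).hasFDerivAt.comp_hasDerivAt (x i) (hasDerivAt_update x i (x i))
  rw [← ofCoordinates_single]
  exact (hf _).hasFDerivAt.comp_hasDerivAt_of_eq (x i) hcurve (by simp)

variable [FiniteDimensional ℝ E]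

lemma norm_gradient (f : E → ℝ) (x : E) : ‖∇ f x‖ = ‖fderiv ℝ f x‖ := by
  rw [← toDual_gradient, LinearIsometryEquiv.norm_map]

lemma sum_sq_fderiv_apply (b : OrthonormalBasis (Fin n) ℝ E) (f : E → ℝ) (x : E) :
    ∑ i, fderiv ℝ f x (b i) ^ 2 = ‖∇ f x‖ ^ 2 := by
  rw [← b.sum_sq_norm_inner_right]
  simp only [real_inner_comm, ← inner_gradient_left, norm_eq_abs, sq_abs]

variable [MeasurableSpace E] [BorelSpace E]

lemma measurePreserving_ofCoordinates (b : OrthonormalBasis (Fin n) ℝ E) :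
    MeasurePreserving (ofCoordinates b) :=
  b.measurePreserving_repr_symm.comp (PiLp.volume_preserving_toLp (Fin n))

lemma integral_comp_ofCoordinates (b : OrthonormalBasis (Fin n) ℝ E) (f : E → ℝ) :
    ∫ x, f (ofCoordinates b x) = ∫ x, f x :=
  (measurePreserving_ofCoordinates b).integral_comp
    (ofCoordinates b).toHomeomorph.measurableEmbedding f

lemma integral_sq_mul_log_sq_le_of_hasCompactSupport {v : ℝ≥0} (hv : v ≠ 0) {f : E → ℝ}
    (hf : ContDiff ℝ 1 f) (hfs : HasCompactSupport f) :
    ∫ x, f x ^ 2 * log (f x ^ 2) ≤ 2 * v * (∫ x, ‖∇ f x‖ ^ 2) +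
      (∫ x, f x ^ 2) *
        (log (∫ x, f x ^ 2) - Module.finrank ℝ E * (1 + log (2 * π * v) / 2)) := by
  let b := stdOrthonormalBasis ℝ E
  let L := ofCoordinates b
  let F : C_c(Fin (Module.finrank ℝ E) → ℝ, ℝ) :=
    ⟨⟨f ∘ L, hf.continuous.comp L.continuous⟩, hfs.comp_homeomorph L.toHomeomorph⟩
  let d (i : Fin (Module.finrank ℝ E)) : C_c(E, ℝ) :=
    ⟨⟨fun x ↦ fderiv ℝ f x (b i), (hf.continuous_fderiv one_ne_zero).clm_apply continuous_const⟩,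
      hfs.fderiv_apply ℝ (b i)⟩
  let dF (i : Fin (Module.finrank ℝ E)) : C_c(Fin (Module.finrank ℝ E) → ℝ, ℝ) :=
    ⟨⟨d i ∘ L, (d i).continuous.comp L.continuous⟩,
      (d i).hasCompactSupport.comp_homeomorph L.toHomeomorph⟩
  have hmajorant := isFisherMajorant_mul_self (f := F) (d := dF)
    (hasDerivAt_comp_ofCoordinates_update b (hf.differentiable one_ne_zero))
  have hentropy : ∫ x, entropyDensity (F * F) x = ∫ x, f x ^ 2 * log (f x ^ 2) := by
    simp only [entropyDensity_apply, sq]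
    exact integral_comp_ofCoordinates b fun x ↦ f x * f x * log (f x * f x)
  have hmass : ∫ x, (F * F) x = ∫ x, f x ^ 2 := by
    simp only [sq]
    exact integral_comp_ofCoordinates b fun x ↦ f x * f x
  have hfisher : ∑ i, ∫ x, (dF i * dF i) x = ∫ x, ‖∇ f x‖ ^ 2 := by
    calc ∑ i, ∫ x, (dF i * dF i) x = ∑ i, ∫ x, (d i * d i) x :=
          Finset.sum_congr rfl fun i _ ↦ integral_comp_ofCoordinates b (d i * d i)
      _ = ∫ x, ∑ i, (d i * d i) x := (integral_finsetSum _ fun i _ ↦ (d i * d i).integrable).symm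
      _ = ∫ x, ‖∇ f x‖ ^ 2 := by
        simp only [← sum_sq_fderiv_apply b, sq]
        rfl
  simpa only [hentropy, hmass, hfisher] using hmajorant.integral_entropyDensity_le hv

end EuclideanSpace

section Cutoff

variable {E : Type*} [NormedAddCommGroup E] [NormedSpace ℝ E]

/-- `η` is an exhausting sequence of compactly supported `C¹` cutoff functions whose derivatives are
uniformly bounded by `C`. -/
structure IsCutoffSeq (η : ℕ → E → ℝ) (C : ℝ) : Prop where
  contDiff (k : ℕ) : ContDiff ℝ 1 (η k)
  hasCompactSupport (k : ℕ) : HasCompactSupport (η k)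
  mem_Icc (k : ℕ) (x : E) : η k x ∈ Icc 0 1
  norm_fderiv_le (k : ℕ) (x : E) : ‖fderiv ℝ (η k) x‖ ≤ C
  eventually_eq_one (x : E) : ∀ᶠ k in atTop, ∀ᶠ y in 𝓝 x, η k y = 1

lemma exists_isCutoffSeq [FiniteDimensional ℝ E] [HasContDiffBump E] :
    ∃ (η : ℕ → E → ℝ) (C : ℝ), IsCutoffSeq η C := by
  let χ : ContDiffBump (0 : E) := ⟨1, 2, one_pos, one_lt_two⟩
  have hχ : ContDiff ℝ 1 χ := χ.contDiff
  obtain ⟨C, hC⟩ := (χ.hasCompactSupport.fderiv (𝕜 := ℝ)).exists_bound_of_continuous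
    (hχ.continuous_fderiv one_ne_zero)
  have hpos (k : ℕ) : (0 : ℝ) < k + 1 := k.cast_add_one_pos
  refine ⟨fun k x ↦ χ ((k + 1 : ℝ)⁻¹ • x), C, fun k ↦ hχ.comp (contDiff_const_smul _),
    fun k ↦ χ.hasCompactSupport.comp_smul (inv_ne_zero (hpos k).ne'),
    fun k x ↦ ⟨χ.nonneg, χ.le_one⟩, fun k x ↦ ?_, fun x ↦ ?_⟩
  · have hle : (k + 1 : ℝ)⁻¹ ≤ 1 := inv_le_one_of_one_le₀ (le_add_of_nonneg_left k.cast_nonneg)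
    rw [fderiv_comp_smul, norm_smul, norm_of_nonneg (inv_nonneg.2 (hpos k).le)]
    exact (mul_le_of_le_one_left (norm_nonneg _) hle).trans (hC _)
  · obtain ⟨m, hm⟩ := exists_nat_gt ‖x‖
    filter_upwards [eventually_ge_atTop m] with k hk
    have hxk : ‖x‖ < k + 1 := by
      have : (m : ℝ) ≤ k := mod_cast hk
      linarith
    filter_upwards [continuous_norm.continuousAt.eventually_lt_const hxk] with y hy
    refine χ.one_of_mem_closedBall ?_
    rw [mem_closedBall_zero_iff, norm_smul, norm_of_nonneg (inv_nonneg.2 (hpos k).le)]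
    exact inv_mul_le_one_of_le₀ hy.le (hpos k).le

namespace IsCutoffSeq

variable {f : E → ℝ} {η : ℕ → E → ℝ} {C : ℝ}

lemma norm_fderiv_mul_sq_le (hη : IsCutoffSeq η C) (hf : Differentiable ℝ f) (k : ℕ) (x : E) :
    ‖fderiv ℝ (fun y ↦ η k y * f y) x‖ ^ 2 ≤ 2 * (‖fderiv ℝ f x‖ ^ 2 + C ^ 2 * f x ^ 2) := by
  have hle : ‖fderiv ℝ (fun y ↦ η k y * f y) x‖ ≤ ‖fderiv ℝ f x‖ + C * |f x| := by
    rw [fderiv_fun_mul ((hη.contDiff k).differentiable one_ne_zero x) (hf x)]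
    refine (norm_add_le _ _).trans (add_le_add ?_ ?_)
    · rw [norm_smul, norm_of_nonneg (hη.mem_Icc k x).1]
      exact mul_le_of_le_one_left (norm_nonneg _) (hη.mem_Icc k x).2
    · rw [norm_smul, norm_eq_abs, mul_comm]
      exact mul_le_mul_of_nonneg_right (hη.norm_fderiv_le k x) (abs_nonneg _)
  calc ‖fderiv ℝ (fun y ↦ η k y * f y) x‖ ^ 2
      ≤ (‖fderiv ℝ f x‖ + C * |f x|) ^ 2 := pow_le_pow_left₀ (norm_nonneg _) hle 2
    _ ≤ 2 * (‖fderiv ℝ f x‖ ^ 2 + (C * |f x|) ^ 2) := add_sq_le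
    _ = 2 * (‖fderiv ℝ f x‖ ^ 2 + C ^ 2 * f x ^ 2) := by rw [mul_pow, sq_abs]

variable [MeasurableSpace E] [BorelSpace E] {μ : Measure E}

lemma tendsto_integral_comp_mul (hη : IsCutoffSeq η C) (hf : Continuous f) {ψ : ℝ → ℝ}
    (hψ : Continuous ψ) {bound : E → ℝ} (hbound : Integrable bound μ)
    (hψf : ∀ u ∈ Icc (0 : ℝ) 1, ∀ x, |ψ (u * f x)| ≤ bound x) :
    Tendsto (fun k ↦ ∫ x, ψ (η k x * f x) ∂μ) atTop (𝓝 (∫ x, ψ (f x) ∂μ)) := by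
  refine tendsto_integral_of_dominated_convergence bound
    (fun k ↦ (hψ.comp ((hη.contDiff k).continuous.mul hf)).aestronglyMeasurable) hbound
    (fun k ↦ .of_forall fun x ↦ hψf _ (hη.mem_Icc k x) x) (.of_forall fun x ↦ ?_)
  refine tendsto_const_nhds.congr' ((hη.eventually_eq_one x).mono fun k hk ↦ ?_)
  simp only [hk.self_of_nhds, one_mul]

lemma tendsto_integral_sq (hη : IsCutoffSeq η C) (hf : Continuous f)
    (hf₂ : Integrable (fun x ↦ f x ^ 2) μ) :
    Tendsto (fun k ↦ ∫ x, (η k x * f x) ^ 2 ∂μ) atTop (𝓝 (∫ x, f x ^ 2 ∂μ)) :=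
  hη.tendsto_integral_comp_mul hf (continuous_pow 2) hf₂ fun u hu x ↦ by
    rw [mul_pow, abs_of_nonneg (by positivity)]
    exact mul_le_of_le_one_left (sq_nonneg _) (pow_le_one₀ hu.1 hu.2)

lemma tendsto_integral_sq_mul_log_sq (hη : IsCutoffSeq η C) (hf : Continuous f)
    (hf₂ : Integrable (fun x ↦ f x ^ 2) μ)
    (hf_log : Integrable (fun x ↦ f x ^ 2 * log (f x ^ 2)) μ) :
    Tendsto (fun k ↦ ∫ x, (η k x * f x) ^ 2 * log ((η k x * f x) ^ 2) ∂μ) atTop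
      (𝓝 (∫ x, f x ^ 2 * log (f x ^ 2) ∂μ)) :=
  hη.tendsto_integral_comp_mul hf (ψ := fun a ↦ a ^ 2 * log (a ^ 2))
    (continuous_mul_log.comp (continuous_pow 2)) (hf₂.add hf_log.norm) fun u hu x ↦ by
    simp only [mul_pow]
    exact abs_mul_mul_log_mul_le (sq_nonneg u) (pow_le_one₀ hu.1 hu.2) (sq_nonneg _)

lemma tendsto_integral_norm_fderiv_sq (hη : IsCutoffSeq η C) (hf : ContDiff ℝ 1 f)
    (hf₂ : Integrable (fun x ↦ f x ^ 2) μ)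
    (hf' : Integrable (fun x ↦ ‖fderiv ℝ f x‖ ^ 2) μ) :
    Tendsto (fun k ↦ ∫ x, ‖fderiv ℝ (fun y ↦ η k y * f y) x‖ ^ 2 ∂μ) atTop
      (𝓝 (∫ x, ‖fderiv ℝ f x‖ ^ 2 ∂μ)) := by
  refine tendsto_integral_of_dominated_convergence _
    (fun k ↦ ((((hη.contDiff k).mul hf).continuous_fderiv
      one_ne_zero).norm.pow 2).aestronglyMeasurable) ((hf'.add (hf₂.const_mul (C ^ 2))).const_mul 2)
    (fun k ↦ .of_forall fun x ↦ ?_) (.of_forall fun x ↦ ?_)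
  · rw [norm_of_nonneg (sq_nonneg _)]
    exact hη.norm_fderiv_mul_sq_le (hf.differentiable one_ne_zero) k x
  · refine tendsto_const_nhds.congr' ((hη.eventually_eq_one x).mono fun k hk ↦ ?_)
    have : (fun y ↦ η k y * f y) =ᶠ[𝓝 x] f := hk.mono fun y hy ↦ by simp only [hy, one_mul]
    simp only [this.fderiv_eq]

end IsCutoffSeq

end Cutoff

section LogSobolev

variable {E : Type*} [NormedAddCommGroup E] [InnerProductSpace ℝ E] [FiniteDimensional ℝ E]
  [MeasurableSpace E] [BorelSpace E] {f : E → ℝ}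

lemma integral_sq_mul_log_sq_le {v : ℝ≥0} (hv : v ≠ 0) (hf : ContDiff ℝ 1 f)
    (hf₂ : Integrable fun x ↦ f x ^ 2) (hf_grad : Integrable fun x ↦ ‖∇ f x‖ ^ 2)
    (hf_log : Integrable fun x ↦ f x ^ 2 * log (f x ^ 2)) :
    ∫ x, f x ^ 2 * log (f x ^ 2) ≤ 2 * v * (∫ x, ‖∇ f x‖ ^ 2) +
      (∫ x, f x ^ 2) *
        (log (∫ x, f x ^ 2) - Module.finrank ℝ E * (1 + log (2 * π * v) / 2)) := by
  obtain ⟨η, C, hη⟩ := exists_isCutoffSeq (E := E)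
  have hcutoff (k : ℕ) := integral_sq_mul_log_sq_le_of_hasCompactSupport hv
    ((hη.contDiff k).mul hf) (hη.hasCompactSupport k).mul_right
  simp only [norm_gradient] at hf_grad hcutoff ⊢
  have hmass := hη.tendsto_integral_sq hf.continuous hf₂
  have hmass_log := (continuous_mul_log.tendsto _).comp hmass
  have hfisher := hη.tendsto_integral_norm_fderiv_sq hf hf₂ hf_grad
  simp only [mul_sub] at hcutoff ⊢
  exact le_of_tendsto_of_tendsto' (hη.tendsto_integral_sq_mul_log_sq hf.continuous hf₂ hf_log)
    ((hfisher.const_mul _).add (hmass_log.sub (hmass.mul_const _))) hcutoff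

lemma integral_sq_mul_log_sq_le_of_integral_sq_eq_one {w : ℝ} (hw : 0 < w) (hf : ContDiff ℝ 1 f)
    (hf_norm : ∫ x, f x ^ 2 = 1) (hf_grad : Integrable fun x ↦ ‖∇ f x‖ ^ 2)
    (hf_log : Integrable fun x ↦ f x ^ 2 * log (f x ^ 2)) :
    ∫ x, f x ^ 2 * log (f x ^ 2) ≤
      (∫ x, ‖∇ f x‖ ^ 2) / (π * exp 1 ^ 2) * w - Module.finrank ℝ E / 2 * log w := by
  have hf₂ : Integrable fun x ↦ f x ^ 2 := .of_integral_ne_zero (by simp [hf_norm])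
  obtain ⟨v, hv⟩ : ∃ v : ℝ≥0, (v : ℝ) = w / (2 * π * exp 1 ^ 2) :=
    ⟨toNNReal _, coe_toNNReal _ (by positivity)⟩
  have hv₀ : v ≠ 0 := by
    rw [← NNReal.coe_ne_zero, hv]
    positivity
  have hlog : log (2 * π * v) = log w - 2 := by
    rw [show 2 * π * v = w / exp 1 ^ 2 by rw [hv]; field_simp, log_div hw.ne' (by positivity),
      log_pow, log_exp, Nat.cast_ofNat, mul_one]
  have := integral_sq_mul_log_sq_le hv₀ hf hf₂ hf_grad hf_log
  rw [hf_norm, log_one, hlog, hv] at this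
  refine this.trans_eq ?_
  field_simp
  ring

theorem stam_log_sobolev_general [Nontrivial E] (hf : ContDiff ℝ 1 f)
    (hf_norm : ∫ x, f x ^ 2 = 1) (hf_grad : Integrable fun x ↦ ‖∇ f x‖ ^ 2)
    (hf_log : Integrable fun x ↦ f x ^ 2 * log (f x ^ 2)) :
    ∫ x, f x ^ 2 * log (f x ^ 2) ≤ Module.finrank ℝ E / 2 *
      log (2 / (π * exp 1 * Module.finrank ℝ E) * ∫ x, ‖∇ f x‖ ^ 2) := by
  have hn : (0 : ℝ) < Module.finrank ℝ E := mod_cast Module.finrank_pos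
  have hA : 0 ≤ ∫ x, ‖∇ f x‖ ^ 2 := integral_nonneg fun x ↦ sq_nonneg _
  convert le_mul_log_of_forall_le (div_nonneg hA (by positivity)) (half_pos hn) fun w hw ↦
    integral_sq_mul_log_sq_le_of_integral_sq_eq_one hw hf hf_norm hf_grad hf_log using 3
  field_simp

end LogSobolev

/-- The Stam-type logarithmic Sobolev inequality on `ℝⁿ` with the sharp dimensional
constant: for smooth `f` with `∫ f² = 1`,
`∫ f² log f² ≤ (n/2) log((2/(πen)) ∫ |∇f|²)`. -/
theorem stam_log_sobolev (n : ℕ) (hn : 1 ≤ n)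
    (f : EuclideanSpace ℝ (Fin n) → ℝ)
    (hf_smooth : ContDiff ℝ (⊤ : ℕ∞) f)
    (hf_norm : ∫ x, f x ^ 2 = 1)
    (hf_grad : Integrable (fun x => ‖gradient f x‖ ^ 2))
    (hf_ent : Integrable (fun x => f x ^ 2 * Real.log (f x ^ 2))) :
    ∫ x, f x ^ 2 * Real.log (f x ^ 2) ≤
      ((n : ℝ) / 2) *
        Real.log ((2 / (π * Real.exp 1 * n)) * ∫ x, ‖gradient f x‖ ^ 2) := by
  have : NeZero n := ⟨Nat.one_le_iff_ne_zero.1 hn⟩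
  simpa only [finrank_euclideanSpace_fin] using
    stam_log_sobolev_general (hf_smooth.of_le (mod_cast le_top)) hf_norm hf_grad hf_ent
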